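/- arXiv:2101.09541 — 9 statements merged into one kernel-verified Lean document; each statement's English description precedes it below -/
import Mathlib

section
/- The point (Q_p*, Q_r*) is a global minimizer of the average holding cost function: for all Q_p > 0 and Q_r > 0, f_1(Q_p*, Q_r*) ≤ f_1(Q_p, Q_r). -/
/-!
Expanding the cost, all `Qr ^ 2` terms cancel, so after division by `Qp` the cost separates as
`f1 Qp Qr = (1 / C3) * ((A_p / Qp + α * Qp) + (C2 * A_r / Qr + β * Qr))` with `α, β > 0`.
Each summand is of economic-order-quantity type `a / x + b * x`, minimized over `x > 0` at
`x = √(a / b)` (`eoq_le`); these two points are exactly `Qps` and `Qrs`.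
-/

/-- The economic-order-quantity bound: with `s = √(a / b)`, the gap between the two sides is
`b * (x - s) ^ 2 / x`. -/
lemma eoq_le {a b x : ℝ} (ha : 0 < a) (hb : 0 < b) (hx : 0 < x) :
    a / Real.sqrt (a / b) + b * Real.sqrt (a / b) ≤ a / x + b * x := by
  have hs : 0 < Real.sqrt (a / b) := by positivity
  have hsq : a = b * Real.sqrt (a / b) ^ 2 := by
    rw [Real.sq_sqrt (by positivity)]; field_simp
  generalize Real.sqrt (a / b) = s at hs hsq
  subst hsq
  have hgap : b * s ^ 2 / x + b * x - (b * s ^ 2 / s + b * s) = b * (x - s) ^ 2 / x := by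
    field_simp
    ring
  have : 0 ≤ b * (x - s) ^ 2 / x := by positivity
  linarith

theorem global_min_unconstrained
    (D_p D_r lam A_p A_r h1 h2 p r : ℝ)
    (hDp : 0 < D_p) (hDr : 0 < D_r) (hlam : 0 < lam)
    (hAp : 0 < A_p) (hAr : 0 < A_r) (hh1 : 0 < h1) (hh2 : 0 < h2)
    (hp0 : 0 < p) (hp1 : p < 1) (hr0 : 0 < r) (hr1 : r < 1)
    (hrel1 : r * p * D_p < D_r) (hrel2 : r * p * D_p < lam)
    (C1 C2 C3 : ℝ)
    (hC1 : C1 = 1 - r * p * D_p / lam)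
    (hC2 : C2 = r * p / (C1 * (1 - r * p * D_p / D_r)))
    (hC3 : C3 = (1 + C2) / (D_p + D_r))
    (f1 : ℝ → ℝ → ℝ)
    (hf1 : ∀ Qp Qr : ℝ, f1 Qp Qr =
      (1 / (C3 * Qp)) * (A_p + (C2 * Qp / Qr) * A_r
        + h1 * (Qp ^ 2 / (2 * D_p) + (C1 * C2 * Qp * Qr / 2) * (C1 / D_r + 1 / lam))
        + h2 * ((1 / 2) * r * p * D_p * (C1 * Qr / D_r + Qp / D_p) ^ 2
            + (1 / (2 * lam)) * C1 * C2 * Qp * Qr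
            + (1 / 2) * r * p * D_p * (C2 * Qp / Qr - 1) * (C1 * Qr / D_r) ^ 2
            + Qr * (1 / lam + C1 / D_r) * (r * p * D_p * C1 * Qr / D_r + r * p * Qp - C1 * Qr)
            + Qr ^ 2 * (1 / lam + C1 / D_r) * (C1 - r * p * D_p * C1 / D_r))))
    (Qps Qrs : ℝ)
    (hQps : Qps = Real.sqrt (2 * A_p * D_p / (h1 + h2 * p * r)))
    (hQrs : Qrs = Real.sqrt (2 * lam * C2 * A_r * D_r /
      (C1 * C2 * D_r * (h1 + h2) + 2 * D_r * h2 * p * r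
        + lam * C1 * (C1 * C2 * h1 + 4 * h2 * p * r + C1 * C2 * D_p * h2 * p * r / D_r))))
    :
    ∀ Qp Qr : ℝ, 0 < Qp → 0 < Qr → f1 Qps Qrs ≤ f1 Qp Qr := by
  have hrp : 0 < r * p := mul_pos hr0 hp0
  have hC1pos : 0 < C1 := by
    rw [hC1, sub_pos, div_lt_one hlam]; exact hrel2
  have hC2pos : 0 < C2 := by
    have : 0 < 1 - r * p * D_p / D_r := by
      rw [sub_pos, div_lt_one hDr]; exact hrel1
    rw [hC2]; positivity
  have hC3pos : 0 < C3 := by rw [hC3]; positivity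
  clear hC1 hC2 hC3
  obtain ⟨α, hα⟩ : ∃ α, α = (h1 + h2 * p * r) / (2 * D_p) := ⟨_, rfl⟩
  obtain ⟨β, hβ⟩ : ∃ β, β = (C1 * C2 * D_r * (h1 + h2) + 2 * D_r * h2 * p * r
        + lam * C1 * (C1 * C2 * h1 + 4 * h2 * p * r + C1 * C2 * D_p * h2 * p * r / D_r))
        / (2 * lam * D_r) := ⟨_, rfl⟩
  have hαpos : 0 < α := by rw [hα]; positivity
  have hβpos : 0 < β := by rw [hβ]; positivity
  -- The `Qr ^ 2` contributions inside the `h2` bracket cancel, which decouples the variables.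
  have key : ∀ Qp Qr : ℝ, 0 < Qp → 0 < Qr →
      f1 Qp Qr = 1 / C3 * ((A_p / Qp + α * Qp) + (C2 * A_r / Qr + β * Qr)) := by
    intro Qp Qr hQp hQr
    rw [hf1, hα, hβ]
    field_simp
    ring
  have hs : Qps = Real.sqrt (A_p / α) := by
    rw [hQps, hα]; congr 1; field_simp
  have ht : Qrs = Real.sqrt (C2 * A_r / β) := by
    rw [hQrs, hβ, div_div_eq_mul_div]; congr 2; ring
  have hQpspos : 0 < Qps := by rw [hs]; positivity
  have hQrspos : 0 < Qrs := by rw [ht]; positivity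
  intro Qp Qr hQp hQr
  rw [key _ _ hQpspos hQrspos, key _ _ hQp hQr, hs, ht]
  have h₁ := eoq_le hAp hαpos hQp
  have h₂ := eoq_le (mul_pos hC2pos hAr) hβpos hQr
  gcongr
end

section
/- The point (Q_p*, Q_r*) is a critical point of the average holding cost function: both partial derivatives of f_1 with respect to Q_p and with respect to Q_r vanish at (Q_p*, Q_r*). -/
/-!
In `f1` the pure `Qr ^ 2` terms cancel (those of `B` against `D'`, those of `E₁` against `E₂`), so
that for nonzero `Qp`, `Qr` the cost separates into two EOQ functions:
`f1 Qp Qr = C3⁻¹ * (A_p / Qp + b * Qp + C2 * A_r / Qr + g * Qr)` with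
`b = (h1 + h2 * p * r) / (2 * D_p)` and `g` the coefficient of `Qr`. Each summand `c / x + g * x`
is stationary at the positive `x` with `g * x ^ 2 = c`, and this is what the two square roots give.
-/

/-- An EOQ cost, up to scaling and an additive constant, is stationary where `g * x ^ 2 = c`. -/
lemma hasDerivAt_eoq (s c g t x : ℝ) (hx : x ≠ 0) (h : g * x ^ 2 = c) :
    HasDerivAt (fun y : ℝ => s * (c / y + g * y + t)) 0 x := by
  have h1 := ((((hasDerivAt_const x c).div (hasDerivAt_id x) hx).add
    ((hasDerivAt_id x).const_mul g)).add_const t).const_mul s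
  refine h1.congr_deriv ?_
  subst h
  simp only [id]
  field_simp
  ring

theorem critical_point
    (D_p D_r lam A_p A_r h1 h2 p r : ℝ)
    (hDp : 0 < D_p) (hDr : 0 < D_r) (hlam : 0 < lam)
    (hAp : 0 < A_p) (hAr : 0 < A_r) (hh1 : 0 < h1) (hh2 : 0 < h2)
    (hp0 : 0 < p) (hp1 : p < 1) (hr0 : 0 < r) (hr1 : r < 1)
    (hrel1 : r * p * D_p < D_r) (hrel2 : r * p * D_p < lam)
    (C1 C2 C3 : ℝ)
    (hC1 : C1 = 1 - r * p * D_p / lam)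
    (hC2 : C2 = r * p / (C1 * (1 - r * p * D_p / D_r)))
    (hC3 : C3 = (1 + C2) / (D_p + D_r))
    (f1 : ℝ → ℝ → ℝ)
    (hf1 : ∀ Qp Qr : ℝ, f1 Qp Qr =
      (1 / (C3 * Qp)) * (A_p + (C2 * Qp / Qr) * A_r
        + h1 * (Qp ^ 2 / (2 * D_p) + (C1 * C2 * Qp * Qr / 2) * (C1 / D_r + 1 / lam))
        + h2 * ((1 / 2) * r * p * D_p * (C1 * Qr / D_r + Qp / D_p) ^ 2
            + (1 / (2 * lam)) * C1 * C2 * Qp * Qr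
            + (1 / 2) * r * p * D_p * (C2 * Qp / Qr - 1) * (C1 * Qr / D_r) ^ 2
            + Qr * (1 / lam + C1 / D_r) * (r * p * D_p * C1 * Qr / D_r + r * p * Qp - C1 * Qr)
            + Qr ^ 2 * (1 / lam + C1 / D_r) * (C1 - r * p * D_p * C1 / D_r))))
    (Qps Qrs : ℝ)
    (hQps : Qps = Real.sqrt (2 * A_p * D_p / (h1 + h2 * p * r)))
    (hQrs : Qrs = Real.sqrt (2 * lam * C2 * A_r * D_r /
      (C1 * C2 * D_r * (h1 + h2) + 2 * D_r * h2 * p * r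
        + lam * C1 * (C1 * C2 * h1 + 4 * h2 * p * r + C1 * C2 * D_p * h2 * p * r / D_r))))
    :
    HasDerivAt (fun x : ℝ => f1 x Qrs) 0 Qps ∧
      HasDerivAt (fun y : ℝ => f1 Qps y) 0 Qrs := by
  have hC1pos : 0 < C1 := by
    rw [hC1, sub_pos, div_lt_one hlam]; exact hrel2
  have hC2pos : 0 < C2 := by
    have : 0 < 1 - r * p * D_p / D_r := by
      rw [sub_pos, div_lt_one hDr]; exact hrel1
    rw [hC2]; positivity
  have hC3pos : 0 < C3 := by rw [hC3]; positivity
  -- only the signs of `C1`, `C2`, `C3` matter from here on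
  clear hC1 hC2 hC3
  have hQp0 : 0 < Qps := by rw [hQps]; positivity
  have hQr0 : 0 < Qrs := by rw [hQrs]; positivity
  have hQp2 : (h1 + h2 * p * r) / (2 * D_p) * Qps ^ 2 = A_p := by
    rw [hQps, Real.sq_sqrt (by positivity)]
    field_simp
  obtain ⟨g, hg⟩ : ∃ g, g = (C1 * C2 * D_r * (h1 + h2) + 2 * D_r * h2 * p * r
        + lam * C1 * (C1 * C2 * h1 + 4 * h2 * p * r + C1 * C2 * D_p * h2 * p * r / D_r))
        / (2 * lam * D_r) := ⟨_, rfl⟩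
  have hQr2 : g * Qrs ^ 2 = C2 * A_r := by
    rw [hQrs, Real.sq_sqrt (by positivity), hg]
    field_simp
  have key : ∀ x y : ℝ, x ≠ 0 → y ≠ 0 → f1 x y =
      1 / C3 * (A_p / x + (h1 + h2 * p * r) / (2 * D_p) * x + (C2 * A_r / y + g * y)) := by
    intro x y hx hy
    rw [hf1, hg]
    field_simp
    ring
  constructor
  · refine (hasDerivAt_eoq (1 / C3) A_p _ (C2 * A_r / Qrs + g * Qrs) Qps hQp0.ne'
      hQp2).congr_of_eventuallyEq ?_
    filter_upwards [isOpen_ne.mem_nhds hQp0.ne'] with x hx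
    exact key x Qrs hx hQr0.ne'
  · refine (hasDerivAt_eoq (1 / C3) (C2 * A_r) g
      (A_p / Qps + (h1 + h2 * p * r) / (2 * D_p) * Qps) Qrs hQr0.ne'
      hQr2).congr_of_eventuallyEq ?_
    filter_upwards [isOpen_ne.mem_nhds hQr0.ne'] with y hy
    rw [key Qps y hQp0.ne' hy]
    ring
end

section
/- The average holding cost function f_1 is convex on the open positive quadrant {(Q_p, Q_r) ∈ ℝ² : Q_p > 0, Q_r > 0}. -/
/-!
The cost is a sum of reciprocals and a linear form. In `A_2` the `Q_r²` contributions of `B` and `D'`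
cancel, and so do those of `E_1` and `E_2`; every remaining term except `A_p` is divisible by `Q_p`.
Hence on the positive quadrant `f_1 = a / Q_p + b / Q_r + c * Q_p + d * Q_r` with `a = A_p / C_3` and
`b = C_2 * A_r / C_3` nonnegative, and convexity follows from that of `x ↦ x⁻¹` on `(0, ∞)`.
-/

/-- The signs of `c` and `d` are irrelevant, since they only multiply linear terms. -/
lemma convexOn_inv_add_inv_add_linear (a b c d : ℝ) (ha : 0 ≤ a) (hb : 0 ≤ b) :
    ConvexOn ℝ {q : ℝ × ℝ | 0 < q.1 ∧ 0 < q.2}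
      (fun q => a * q.1⁻¹ + b * q.2⁻¹ + (c * q.1 + d * q.2)) := by
  have hinv : ConvexOn ℝ (Set.Ioi (0 : ℝ)) (fun x : ℝ => x⁻¹) := by
    simpa using convexOn_zpow (𝕜 := ℝ) (-1)
  have hS : Convex ℝ {q : ℝ × ℝ | 0 < q.1 ∧ 0 < q.2} :=
    ((convex_Ioi (0 : ℝ)).linear_preimage (LinearMap.fst ℝ ℝ ℝ)).inter
      ((convex_Ioi (0 : ℝ)).linear_preimage (LinearMap.snd ℝ ℝ ℝ))
  have h1 : ConvexOn ℝ {q : ℝ × ℝ | 0 < q.1 ∧ 0 < q.2} (fun q => a * q.1⁻¹) :=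
    ((hinv.comp_linearMap (LinearMap.fst ℝ ℝ ℝ)).subset (fun _ hq => hq.1) hS).smul ha
  have h2 : ConvexOn ℝ {q : ℝ × ℝ | 0 < q.1 ∧ 0 < q.2} (fun q => b * q.2⁻¹) :=
    ((hinv.comp_linearMap (LinearMap.snd ℝ ℝ ℝ)).subset (fun _ hq => hq.2) hS).smul hb
  have h3 : ConvexOn ℝ {q : ℝ × ℝ | 0 < q.1 ∧ 0 < q.2} (fun q => c * q.1 + d * q.2) :=
    (c • LinearMap.fst ℝ ℝ ℝ + d • LinearMap.snd ℝ ℝ ℝ).convexOn hS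
  exact (h1.add h2).add h3

theorem f1_convex
    (D_p D_r lam A_p A_r h1 h2 p r : ℝ)
    (hDp : 0 < D_p) (hDr : 0 < D_r) (hlam : 0 < lam)
    (hAp : 0 < A_p) (hAr : 0 < A_r) (hh1 : 0 < h1) (hh2 : 0 < h2)
    (hp0 : 0 < p) (hp1 : p < 1) (hr0 : 0 < r) (hr1 : r < 1)
    (hrel1 : r * p * D_p < D_r) (hrel2 : r * p * D_p < lam)
    (C1 C2 C3 : ℝ)
    (hC1 : C1 = 1 - r * p * D_p / lam)
    (hC2 : C2 = r * p / (C1 * (1 - r * p * D_p / D_r)))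
    (hC3 : C3 = (1 + C2) / (D_p + D_r))
    (f1 : ℝ → ℝ → ℝ)
    (hf1 : ∀ Qp Qr : ℝ, f1 Qp Qr =
      (1 / (C3 * Qp)) * (A_p + (C2 * Qp / Qr) * A_r
        + h1 * (Qp ^ 2 / (2 * D_p) + (C1 * C2 * Qp * Qr / 2) * (C1 / D_r + 1 / lam))
        + h2 * ((1 / 2) * r * p * D_p * (C1 * Qr / D_r + Qp / D_p) ^ 2
            + (1 / (2 * lam)) * C1 * C2 * Qp * Qr
            + (1 / 2) * r * p * D_p * (C2 * Qp / Qr - 1) * (C1 * Qr / D_r) ^ 2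
            + Qr * (1 / lam + C1 / D_r) * (r * p * D_p * C1 * Qr / D_r + r * p * Qp - C1 * Qr)
            + Qr ^ 2 * (1 / lam + C1 / D_r) * (C1 - r * p * D_p * C1 / D_r))))
    :
    ConvexOn ℝ {q : ℝ × ℝ | 0 < q.1 ∧ 0 < q.2} (fun q => f1 q.1 q.2) := by
  have hC1pos : 0 < C1 := by
    rw [hC1, sub_pos, div_lt_one hlam]
    exact hrel2
  have hden : 0 < 1 - r * p * D_p / D_r := by
    rw [sub_pos, div_lt_one hDr]
    exact hrel1
  have hC2pos : 0 < C2 := by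
    rw [hC2]
    positivity
  have hC3pos : 0 < C3 := by
    rw [hC3]
    positivity
  -- From here on only the positivity of `C1`, `C2`, `C3` matters, not their values.
  clear hC1 hC2 hC3 hden
  refine (convexOn_inv_add_inv_add_linear (A_p / C3) (C2 * A_r / C3)
    ((h1 / (2 * D_p) + h2 * (r * p / (2 * D_p))) / C3)
    ((h1 * (C1 * C2 / 2 * (C1 / D_r + 1 / lam))
      + h2 * (r * p * C1 / D_r + C1 * C2 / (2 * lam) + r * p * D_p * C2 * C1 ^ 2 / (2 * D_r ^ 2)
        + r * p * (1 / lam + C1 / D_r))) / C3)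
    (by positivity) (by positivity)).congr ?_
  rintro ⟨x, y⟩ ⟨hx, hy⟩
  simp only at hx hy
  simp only [hf1]
  field_simp
  ring
end

section
/- If the unconstrained optimum (Q_p*, Q_r*) satisfies both floor-space constraints, i.e. g_1(Q_p*, Q_r*) ≤ 0 and g_2(Q_p*, Q_r*) ≤ 0, then (Q_p*, Q_r*) is a global minimizer of the constrained problem: f_1(Q_p*, Q_r*) ≤ f_1(Q_p, Q_r) for all Q_p > 0, Q_r > 0 with g_1(Q_p, Q_r) ≤ 0 and g_2(Q_p, Q_r) ≤ 0. -/
/-!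
In `A_2` the `Q_r ^ 2` contributions of `B` and `D'` cancel, and so do those of `E_1` and `E_2`.
Everything left is divisible by `Q_p`, so the cost separates:
`C_3 * f_1 = (A_p / Q_p + K_p * Q_p) + (C_2 * A_r / Q_r + K_r * Q_r)` with positive constants
`K_p`, `K_r`. Each bracket is an economic-order-quantity function `a / x + b * x`, minimized over
`x > 0` at `√(a / b)` (lemma `eoq_min`), and these two minimizers are exactly `Q_p*` and `Q_r*`.
Hence `(Q_p*, Q_r*)` minimizes `f_1` over the whole positive quadrant, in particular over its
feasible part.
-/

lemma eoq_min {a b x : ℝ} (ha : 0 < a) (hb : 0 < b) (hx : 0 < x) :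
    a / √(a / b) + b * √(a / b) ≤ a / x + b * x := by
  have hs : 0 < √(a / b) := Real.sqrt_pos.mpr (div_pos ha hb)
  have hsq : √(a / b) ^ 2 = a / b := Real.sq_sqrt (div_pos ha hb).le
  set s := √(a / b)
  have hab : a = b * s ^ 2 := by rw [hsq]; field_simp
  have key : a / x + b * x - (a / s + b * s) = b * (x - s) ^ 2 / x := by
    rw [hab]; field_simp; ring
  have : 0 ≤ b * (x - s) ^ 2 / x := by positivity
  linarith

theorem case_I_constrained_global_min
    (D_p D_r lam A_p A_r h1 h2 p r : ℝ)
    (hDp : 0 < D_p) (hDr : 0 < D_r) (hlam : 0 < lam)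
    (hAp : 0 < A_p) (hAr : 0 < A_r) (hh1 : 0 < h1) (hh2 : 0 < h2)
    (hp0 : 0 < p) (hp1 : p < 1) (hr0 : 0 < r) (hr1 : r < 1)
    (hrel1 : r * p * D_p < D_r) (hrel2 : r * p * D_p < lam)
    (C1 C2 C3 : ℝ)
    (hC1 : C1 = 1 - r * p * D_p / lam)
    (hC2 : C2 = r * p / (C1 * (1 - r * p * D_p / D_r)))
    (hC3 : C3 = (1 + C2) / (D_p + D_r))
    (f1 : ℝ → ℝ → ℝ)
    (hf1 : ∀ Qp Qr : ℝ, f1 Qp Qr =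
      (1 / (C3 * Qp)) * (A_p + (C2 * Qp / Qr) * A_r
        + h1 * (Qp ^ 2 / (2 * D_p) + (C1 * C2 * Qp * Qr / 2) * (C1 / D_r + 1 / lam))
        + h2 * ((1 / 2) * r * p * D_p * (C1 * Qr / D_r + Qp / D_p) ^ 2
            + (1 / (2 * lam)) * C1 * C2 * Qp * Qr
            + (1 / 2) * r * p * D_p * (C2 * Qp / Qr - 1) * (C1 * Qr / D_r) ^ 2
            + Qr * (1 / lam + C1 / D_r) * (r * p * D_p * C1 * Qr / D_r + r * p * Qp - C1 * Qr)
            + Qr ^ 2 * (1 / lam + C1 / D_r) * (C1 - r * p * D_p * C1 / D_r))))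
    (Qps Qrs : ℝ)
    (hQps : Qps = Real.sqrt (2 * A_p * D_p / (h1 + h2 * p * r)))
    (hQrs : Qrs = Real.sqrt (2 * lam * C2 * A_r * D_r /
      (C1 * C2 * D_r * (h1 + h2) + 2 * D_r * h2 * p * r
        + lam * C1 * (C1 * C2 * h1 + 4 * h2 * p * r + C1 * C2 * D_p * h2 * p * r / D_r))))
    (p1 p2 k1 k2 : ℝ)
    (hp1' : 0 < p1) (hp2' : 0 < p2) (hk1 : 0 < k1) (hk2 : 0 < k2)
    (g1 g2 : ℝ → ℝ → ℝ)
    (hg1 : ∀ Qp Qr : ℝ, g1 Qp Qr = p1 * Qp - k1)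
    (hg2 : ∀ Qp Qr : ℝ, g2 Qp Qr = p2 * (C1 * Qr / D_r + Qp / D_p) * r * p * D_p - k2)
    (hfeas1 : g1 Qps Qrs ≤ 0) (hfeas2 : g2 Qps Qrs ≤ 0) :
    ∀ Qp Qr : ℝ, 0 < Qp → 0 < Qr → g1 Qp Qr ≤ 0 → g2 Qp Qr ≤ 0 →
      f1 Qps Qrs ≤ f1 Qp Qr := by
  intro Qp Qr hQp hQr _ _
  have hC1pos : 0 < C1 := by
    rw [hC1, sub_pos, div_lt_one hlam]; exact hrel2
  have hC2pos : 0 < C2 := by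
    have : 0 < 1 - r * p * D_p / D_r := by
      rw [sub_pos, div_lt_one hDr]; exact hrel1
    rw [hC2]; positivity
  have hC3pos : 0 < C3 := by rw [hC3]; positivity
  clear hC1 hC2 hC3
  -- The coefficients of `Q_p` and `Q_r` in `C_3 * f_1`.
  obtain ⟨Kp, hKp⟩ : ∃ K, K = (h1 + h2 * p * r) / (2 * D_p) := ⟨_, rfl⟩
  obtain ⟨Kr, hKr⟩ : ∃ K, K = (C1 * C2 * D_r * (h1 + h2) + 2 * D_r * h2 * p * r
        + lam * C1 * (C1 * C2 * h1 + 4 * h2 * p * r + C1 * C2 * D_p * h2 * p * r / D_r))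
        / (2 * lam * D_r) := ⟨_, rfl⟩
  have hKp0 : 0 < Kp := by rw [hKp]; positivity
  have hKr0 : 0 < Kr := by rw [hKr]; positivity
  have sep : ∀ x y : ℝ, 0 < x → 0 < y →
      f1 x y = (1 / C3) * ((A_p / x + Kp * x) + (C2 * A_r / y + Kr * y)) := by
    intro x y hx hy
    rw [hf1, hKp, hKr]
    field_simp
    ring
  have hp_eq : Qps = √(A_p / Kp) := by
    rw [hQps, hKp]; congr 1; field_simp
  have hr_eq : Qrs = √(C2 * A_r / Kr) := by
    rw [hQrs, hKr, div_div_eq_mul_div]; congr 2; ring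
  have hQps0 : 0 < Qps := by rw [hp_eq]; positivity
  have hQrs0 : 0 < Qrs := by rw [hr_eq]; positivity
  rw [sep _ _ hQps0 hQrs0, sep _ _ hQp hQr, hp_eq, hr_eq]
  have m1 := eoq_min hAp hKp0 hQp
  have m2 := eoq_min (mul_pos hC2pos hAr) hKr0 hQr
  gcongr
end

section
/- For any Lagrange multipliers λ_1 ≥ 0 and λ_2 ≥ 0, define C_4 = C_1·C_2·h_1 + 4·h_2·p·r + 2·λ_2·D_p·C_3·p·p_2·r + C_1·C_2·D_p·h_2·p·r/D_r, Q_p** = √(2·A_p·D_p/(h_1 + 2·λ_1·D_p·C_3·p_1 + h_2·p·r + 2·λ_2·D_p·C_3·p·p_2·r)) and Q_r** = √(2·λ·C_2·A_r·D_r/(C_1·C_2·D_r·(h_1 + h_2) + 2·D_r·h_2·p·r + λ·C_1·C_4)). Then the Lagrangian stationarity condition holds at (Q_p**, Q_r**): ∇f_1(Q_p**, Q_r**) + λ_1·∇g_1(Q_p**, Q_r**) + λ_2·∇g_2(Q_p**, Q_r**) = 0. -/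
/-!
Expanding `A_2`, the `Qr ^ 2` terms of `B` and `D'` cancel, as do those of `E_1` and `E_2`, so that
for nonzero arguments the cost separates:
`C3 * f1 x y = A_p / x + C2 * A_r / y + a * x + K * y` with constants `a`, `K`.
The constraints are affine, so in each variable the Lagrangian has the form `α / t + β * t + γ`,
which is stationary where `β * t ^ 2 = α` (`hasDerivAt_hyperbola_zero`). The two square roots are
exactly the positive solutions of these equations.
-/

theorem hasDerivAt_hyperbola_zero {F : ℝ → ℝ} {t α β γ : ℝ} (ht : 0 < t)
    (hF : ∀ x, 0 < x → F x = α / x + β * x + γ) (h : β * t ^ 2 = α) :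
    HasDerivAt F 0 t := by
  have h1 : HasDerivAt (fun x : ℝ => α * x⁻¹ + β * x + γ) (α * (-(t ^ 2)⁻¹) + β * 1) t :=
    (((hasDerivAt_inv ht.ne').const_mul α).add ((hasDerivAt_id t).const_mul β)).add_const γ
  have h2 : α * (-(t ^ 2)⁻¹) + β * 1 = 0 := by
    rw [← h]
    have := ht.ne'
    field_simp
    ring
  rw [h2] at h1
  refine h1.congr_of_eventuallyEq ?_
  filter_upwards [lt_mem_nhds ht] with x hx
  rw [hF x hx, div_eq_mul_inv]

theorem lagrangian_stationarity
    (D_p D_r lam A_p A_r h1 h2 p r : ℝ)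
    (hDp : 0 < D_p) (hDr : 0 < D_r) (hlam : 0 < lam)
    (hAp : 0 < A_p) (hAr : 0 < A_r) (hh1 : 0 < h1) (hh2 : 0 < h2)
    (hp0 : 0 < p) (hp1 : p < 1) (hr0 : 0 < r) (hr1 : r < 1)
    (hrel1 : r * p * D_p < D_r) (hrel2 : r * p * D_p < lam)
    (C1 C2 C3 : ℝ)
    (hC1 : C1 = 1 - r * p * D_p / lam)
    (hC2 : C2 = r * p / (C1 * (1 - r * p * D_p / D_r)))
    (hC3 : C3 = (1 + C2) / (D_p + D_r))
    (f1 : ℝ → ℝ → ℝ)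
    (hf1 : ∀ Qp Qr : ℝ, f1 Qp Qr =
      (1 / (C3 * Qp)) * (A_p + (C2 * Qp / Qr) * A_r
        + h1 * (Qp ^ 2 / (2 * D_p) + (C1 * C2 * Qp * Qr / 2) * (C1 / D_r + 1 / lam))
        + h2 * ((1 / 2) * r * p * D_p * (C1 * Qr / D_r + Qp / D_p) ^ 2
            + (1 / (2 * lam)) * C1 * C2 * Qp * Qr
            + (1 / 2) * r * p * D_p * (C2 * Qp / Qr - 1) * (C1 * Qr / D_r) ^ 2
            + Qr * (1 / lam + C1 / D_r) * (r * p * D_p * C1 * Qr / D_r + r * p * Qp - C1 * Qr)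
            + Qr ^ 2 * (1 / lam + C1 / D_r) * (C1 - r * p * D_p * C1 / D_r))))
    (p1 p2 k1 k2 : ℝ)
    (hp1' : 0 < p1) (hp2' : 0 < p2) (hk1 : 0 < k1) (hk2 : 0 < k2)
    (g1 g2 : ℝ → ℝ → ℝ)
    (hg1 : ∀ Qp Qr : ℝ, g1 Qp Qr = p1 * Qp - k1)
    (hg2 : ∀ Qp Qr : ℝ, g2 Qp Qr = p2 * (C1 * Qr / D_r + Qp / D_p) * r * p * D_p - k2)
    (l1 l2 : ℝ) (hl1 : 0 ≤ l1) (hl2 : 0 ≤ l2)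
    (C4 : ℝ)
    (hC4 : C4 = C1 * C2 * h1 + 4 * h2 * p * r + 2 * l2 * D_p * C3 * p * p2 * r
      + C1 * C2 * D_p * h2 * p * r / D_r)
    (Qpss Qrss : ℝ)
    (hQpss : Qpss = Real.sqrt (2 * A_p * D_p /
      (h1 + 2 * l1 * D_p * C3 * p1 + h2 * p * r + 2 * l2 * D_p * C3 * p * p2 * r)))
    (hQrss : Qrss = Real.sqrt (2 * lam * C2 * A_r * D_r /
      (C1 * C2 * D_r * (h1 + h2) + 2 * D_r * h2 * p * r + lam * C1 * C4))) :
    HasDerivAt (fun x : ℝ => f1 x Qrss + l1 * g1 x Qrss + l2 * g2 x Qrss) 0 Qpss ∧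
      HasDerivAt (fun y : ℝ => f1 Qpss y + l1 * g1 Qpss y + l2 * g2 Qpss y) 0 Qrss := by
  have hC1pos : 0 < C1 := by
    rw [hC1, sub_pos, div_lt_one hlam]
    exact hrel2
  have hC2pos : 0 < C2 := by
    have : 0 < 1 - r * p * D_p / D_r := by
      rw [sub_pos, div_lt_one hDr]
      exact hrel1
    rw [hC2]
    positivity
  have hC3pos : 0 < C3 := by
    rw [hC3]
    positivity
  -- From here on only the positivity of `C1`, `C2`, `C3` matters, not their values.
  clear hC1 hC2 hC3
  have hC4pos : 0 < C4 := by
    rw [hC4]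
    positivity
  have hQp : 0 < Qpss := by
    rw [hQpss]
    positivity
  have hQr : 0 < Qrss := by
    rw [hQrss]
    positivity
  have hQp2 : Qpss ^ 2 = 2 * A_p * D_p /
      (h1 + 2 * l1 * D_p * C3 * p1 + h2 * p * r + 2 * l2 * D_p * C3 * p * p2 * r) := by
    rw [hQpss]
    exact Real.sq_sqrt (by positivity)
  have hQr2 : Qrss ^ 2 = 2 * lam * C2 * A_r * D_r /
      (C1 * C2 * D_r * (h1 + h2) + 2 * D_r * h2 * p * r + lam * C1 * C4) := by
    rw [hQrss]
    exact Real.sq_sqrt (by positivity)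
  obtain ⟨K, hK⟩ : ∃ K, K = (C1 * C2 * D_r * (h1 + h2) + 2 * D_r * h2 * p * r
      + lam * C1 * (C1 * C2 * h1 + 4 * h2 * p * r + C1 * C2 * D_p * h2 * p * r / D_r))
      / (2 * lam * D_r) := ⟨_, rfl⟩
  have hsep : ∀ x y : ℝ, 0 < x → 0 < y → f1 x y =
      (A_p / x + C2 * A_r / y + (h1 + h2 * p * r) / (2 * D_p) * x + K * y) / C3 := by
    intro x y hx hy
    rw [hf1, hK]
    field_simp
    ring
  constructor
  · refine hasDerivAt_hyperbola_zero (α := A_p / C3)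
      (β := (h1 + h2 * p * r) / (2 * D_p * C3) + l1 * p1 + l2 * p2 * r * p)
      (γ := (C2 * A_r / Qrss + K * Qrss) / C3 - l1 * k1
        + l2 * (p2 * (C1 * Qrss / D_r) * r * p * D_p - k2)) hQp ?_ ?_
    · intro x hx
      rw [hsep x Qrss hx hQr, hg1, hg2]
      field_simp
      ring
    · rw [hQp2]
      field_simp
      ring
  · refine hasDerivAt_hyperbola_zero (α := C2 * A_r / C3)
      (β := K / C3 + l2 * p2 * (C1 / D_r) * r * p * D_p)
      (γ := (A_p / Qpss + (h1 + h2 * p * r) / (2 * D_p) * Qpss) / C3 + l1 * (p1 * Qpss - k1)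
        + l2 * (p2 * (Qpss / D_p) * r * p * D_p - k2)) hQr ?_ ?_
    · intro y hy
      rw [hsep Qpss y hQp hy, hg1, hg2]
      field_simp
      ring
    · rw [hQr2]
      have hden : 0 < C1 * C2 * D_r * (h1 + h2) + 2 * D_r * h2 * p * r + lam * C1 * C4 := by
        positivity
      have hβ : K / C3 + l2 * p2 * (C1 / D_r) * r * p * D_p =
          (C1 * C2 * D_r * (h1 + h2) + 2 * D_r * h2 * p * r + lam * C1 * C4)
            / (2 * lam * D_r * C3) := by
        rw [hK, hC4]
        field_simp
        ring
      rw [hβ]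
      field_simp
end

section
/- (Case II) Set Q_p** = k_1/p_1, let Q_r** = Q_r*, and let λ_1 = (2·A_p·D_p − (Q_p**)²·(h_1 + h_2·p·r))/(2·(Q_p**)²·D_p·C_3·p_1). If λ_1 > 0 and the point (Q_p**, Q_r**) satisfies g_2(Q_p**, Q_r**) ≤ 0, then (Q_p**, Q_r**) is a global minimizer of the constrained problem: f_1(Q_p**, Q_r**) ≤ f_1(Q_p, Q_r) for all Q_p > 0, Q_r > 0 with g_1(Q_p, Q_r) ≤ 0 and g_2(Q_p, Q_r) ≤ 0. -/
/-!
On `Q_p, Q_r > 0` the `Q_r ^ 2` contributions of `B` and `D'`, and those of `E_1` and `E_2`, cancel,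
so the cost separates:
`C_3 * f_1 = (A_p / Q_p + b * Q_p) + (C_2 * A_r / Q_r + K * Q_r)`,
with `b = (h_1 + h_2 * p * r) / (2 * D_p)` and `K` equal to the denominator inside `Q_r*` divided by
`2 * λ * D_r` (`cost_separated`). Each summand has the shape `a / x + b * x`, which decreases on
`(0, √(a / b)]` and attains its minimum at `√(a / b)` (`div_add_mul_le`). The second summand is
minimized at `Q_r*`. Positivity of the multiplier says `b * (Q_p**) ^ 2 < A_p`, and `g_1 ≤ 0` says
`Q_p ≤ Q_p**`, so the first summand is smallest at `Q_p**`.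
-/

/-- Comparison of the economic-order-quantity cost `a / x + b * x` at two points. The hypothesis
covers both the minimizer `y` (`a = b * y ^ 2`, any `x`) and the decreasing range (`x ≤ y` and
`b * y ^ 2 ≤ a`). -/
lemma div_add_mul_le {a b x y : ℝ} (hx : 0 < x) (hy : 0 < y) (hb : 0 < b)
    (h : b * y ^ 2 = a ∨ (b * y ^ 2 ≤ a ∧ x ≤ y)) :
    a / y + b * y ≤ a / x + b * x := by
  have key : a / x + b * x - (a / y + b * y) = (y - x) * (a - b * x * y) / (x * y) := by
    field_simp
    ring
  have hnum : 0 ≤ (y - x) * (a - b * x * y) := by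
    rcases h with h | ⟨h, hxy⟩
    · have : (y - x) * (a - b * x * y) = b * y * (y - x) ^ 2 := by rw [← h]; ring
      rw [this]
      positivity
    · apply mul_nonneg (by linarith)
      have : b * y * x ≤ b * y * y := by gcongr
      linarith
  have : 0 ≤ (y - x) * (a - b * x * y) / (x * y) := by positivity
  linarith

/-- The cost bracket divided by `C_3 * Q_p`, written as a function of `Q_p` plus a function of
`Q_r`. -/
lemma cost_separated (D_p D_r lam A_p A_r h1 h2 p r C1 C2 C3 Qp Qr : ℝ)
    (hDp : 0 < D_p) (hDr : 0 < D_r) (hlam : 0 < lam) (hC3 : 0 < C3) (hQp : 0 < Qp) (hQr : 0 < Qr) :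
    (1 / (C3 * Qp)) * (A_p + (C2 * Qp / Qr) * A_r
        + h1 * (Qp ^ 2 / (2 * D_p) + (C1 * C2 * Qp * Qr / 2) * (C1 / D_r + 1 / lam))
        + h2 * ((1 / 2) * r * p * D_p * (C1 * Qr / D_r + Qp / D_p) ^ 2
            + (1 / (2 * lam)) * C1 * C2 * Qp * Qr
            + (1 / 2) * r * p * D_p * (C2 * Qp / Qr - 1) * (C1 * Qr / D_r) ^ 2
            + Qr * (1 / lam + C1 / D_r) * (r * p * D_p * C1 * Qr / D_r + r * p * Qp - C1 * Qr)
            + Qr ^ 2 * (1 / lam + C1 / D_r) * (C1 - r * p * D_p * C1 / D_r)))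
      = (1 / C3) * ((A_p / Qp + (h1 + h2 * p * r) / (2 * D_p) * Qp)
        + (C2 * A_r / Qr + (C1 * C2 * D_r * (h1 + h2) + 2 * D_r * h2 * p * r
        + lam * C1 * (C1 * C2 * h1 + 4 * h2 * p * r + C1 * C2 * D_p * h2 * p * r / D_r))
          / (2 * lam * D_r) * Qr)) := by
  field_simp
  ring

theorem case_II_constrained_global_min
    (D_p D_r lam A_p A_r h1 h2 p r : ℝ)
    (hDp : 0 < D_p) (hDr : 0 < D_r) (hlam : 0 < lam)
    (hAp : 0 < A_p) (hAr : 0 < A_r) (hh1 : 0 < h1) (hh2 : 0 < h2)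
    (hp0 : 0 < p) (hp1 : p < 1) (hr0 : 0 < r) (hr1 : r < 1)
    (hrel1 : r * p * D_p < D_r) (hrel2 : r * p * D_p < lam)
    (C1 C2 C3 : ℝ)
    (hC1 : C1 = 1 - r * p * D_p / lam)
    (hC2 : C2 = r * p / (C1 * (1 - r * p * D_p / D_r)))
    (hC3 : C3 = (1 + C2) / (D_p + D_r))
    (f1 : ℝ → ℝ → ℝ)
    (hf1 : ∀ Qp Qr : ℝ, f1 Qp Qr =
      (1 / (C3 * Qp)) * (A_p + (C2 * Qp / Qr) * A_r
        + h1 * (Qp ^ 2 / (2 * D_p) + (C1 * C2 * Qp * Qr / 2) * (C1 / D_r + 1 / lam))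
        + h2 * ((1 / 2) * r * p * D_p * (C1 * Qr / D_r + Qp / D_p) ^ 2
            + (1 / (2 * lam)) * C1 * C2 * Qp * Qr
            + (1 / 2) * r * p * D_p * (C2 * Qp / Qr - 1) * (C1 * Qr / D_r) ^ 2
            + Qr * (1 / lam + C1 / D_r) * (r * p * D_p * C1 * Qr / D_r + r * p * Qp - C1 * Qr)
            + Qr ^ 2 * (1 / lam + C1 / D_r) * (C1 - r * p * D_p * C1 / D_r))))
    (Qrs : ℝ)
    (hQrs : Qrs = Real.sqrt (2 * lam * C2 * A_r * D_r /
      (C1 * C2 * D_r * (h1 + h2) + 2 * D_r * h2 * p * r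
        + lam * C1 * (C1 * C2 * h1 + 4 * h2 * p * r + C1 * C2 * D_p * h2 * p * r / D_r))))
    (p1 p2 k1 k2 : ℝ)
    (hp1' : 0 < p1) (hp2' : 0 < p2) (hk1 : 0 < k1) (hk2 : 0 < k2)
    (g1 g2 : ℝ → ℝ → ℝ)
    (hg1 : ∀ Qp Qr : ℝ, g1 Qp Qr = p1 * Qp - k1)
    (hg2 : ∀ Qp Qr : ℝ, g2 Qp Qr = p2 * (C1 * Qr / D_r + Qp / D_p) * r * p * D_p - k2)
    (Qpss Qrss : ℝ)
    (hQpss : Qpss = k1 / p1)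
    (hQrss : Qrss = Qrs)
    (l1 : ℝ)
    (hl1def : l1 = (2 * A_p * D_p - Qpss ^ 2 * (h1 + h2 * p * r)) /
      (2 * Qpss ^ 2 * D_p * C3 * p1))
    (hl1pos : 0 < l1)
    (hfeas2 : g2 Qpss Qrss ≤ 0) :
    ∀ Qp Qr : ℝ, 0 < Qp → 0 < Qr → g1 Qp Qr ≤ 0 → g2 Qp Qr ≤ 0 →
      f1 Qpss Qrss ≤ f1 Qp Qr := by
  intro Qp Qr hQp hQr hc1 _
  have hC1pos : 0 < C1 := by
    have : r * p * D_p / lam < 1 := (div_lt_one hlam).2 hrel2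
    rw [hC1]; linarith
  have hC2pos : 0 < C2 := by
    have : r * p * D_p / D_r < 1 := (div_lt_one hDr).2 hrel1
    have h' : 0 < 1 - r * p * D_p / D_r := by linarith
    rw [hC2]; positivity
  have hC3pos : 0 < C3 := by rw [hC3]; positivity
  clear hC1 hC2 hC3
  have hQpss0 : 0 < Qpss := by rw [hQpss]; positivity
  have hle : Qp ≤ Qpss := by
    rw [hg1] at hc1
    rw [hQpss, le_div_iff₀ hp1']
    linarith
  set den := C1 * C2 * D_r * (h1 + h2) + 2 * D_r * h2 * p * r
        + lam * C1 * (C1 * C2 * h1 + 4 * h2 * p * r + C1 * C2 * D_p * h2 * p * r / D_r) with hden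
  have hdenpos : 0 < den := by positivity
  have hQrss0 : 0 < Qrss := by rw [hQrss, hQrs]; positivity
  have hsq : den / (2 * lam * D_r) * Qrss ^ 2 = C2 * A_r := by
    rw [hQrss, hQrs, Real.sq_sqrt (by positivity)]
    field_simp
  have hpsq : (h1 + h2 * p * r) / (2 * D_p) * Qpss ^ 2 ≤ A_p := by
    rw [hl1def] at hl1pos
    have := (div_pos_iff_of_pos_right (by positivity)).1 hl1pos
    rw [div_mul_eq_mul_div, div_le_iff₀ (by positivity)]
    linarith
  rw [hf1, hf1, cost_separated D_p D_r lam A_p A_r h1 h2 p r C1 C2 C3 Qpss Qrss hDp hDr hlam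
      hC3pos hQpss0 hQrss0, cost_separated D_p D_r lam A_p A_r h1 h2 p r C1 C2 C3 Qp Qr hDp hDr
      hlam hC3pos hQp hQr, ← hden]
  apply mul_le_mul_of_nonneg_left _ (by positivity)
  exact add_le_add (div_add_mul_le hQp hQpss0 (by positivity) (Or.inr ⟨hpsq, hle⟩))
    (div_add_mul_le hQr hQrss0 (by positivity) (Or.inl hsq))
end

section
/- If x̄ ∈ X is a Pareto (efficient) point, then for every index k, x̄ solves the scalar problem (P_{x̄}^k): for every x ∈ X satisfying w_i(x̄)·f_i(x) ≤ w_k(x̄)·f_k(x̄) for all i ≠ k, one has w_k(x̄)·f_k(x̄) ≤ w_k(x̄)·f_k(x). -/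
/-!
The weights at `xbar` are positive and make all the products `w xbar i * f i xbar` equal. The
constraints of the scalar problem therefore say exactly `f i x ≤ f i xbar` for `i ≠ k`, so a
feasible point with a strictly smaller objective would dominate `xbar`, against efficiency.
-/

theorem pareto_solves_scalar_problems
    {X : Type*} (l : ℕ) (hl : 1 ≤ l)
    (f : Fin l → X → ℝ) (hf : ∀ (i : Fin l) (x : X), 0 < f i x)
    (w : X → Fin l → ℝ)
    (hw : ∀ (x : X) (i : Fin l), w x i = (1 / f i x) / ∑ j : Fin l, 1 / f j x)
    (xbar : X)
    (hpareto : ¬ ∃ x : X, (∀ i : Fin l, f i x ≤ f i xbar) ∧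
      (∃ j : Fin l, f j x < f j xbar)) :
    ∀ k : Fin l, ∀ x : X,
      (∀ i : Fin l, i ≠ k → w xbar i * f i x ≤ w xbar k * f k xbar) →
      w xbar k * f k xbar ≤ w xbar k * f k x := by
  intro k x hx
  have hS : 0 < ∑ j : Fin l, 1 / f j xbar :=
    Finset.sum_pos (fun j _ => one_div_pos.mpr (hf j xbar)) ⟨k, Finset.mem_univ k⟩
  have hwpos : ∀ i, 0 < w xbar i := fun i => by
    rw [hw]
    exact div_pos (one_div_pos.mpr (hf i xbar)) hS
  -- The weights equalize the objectives at `xbar`: each product is the reciprocal of the sum.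
  have hval : ∀ i, w xbar i * f i xbar = 1 / ∑ j : Fin l, 1 / f j xbar := fun i => by
    rw [hw, div_mul_eq_mul_div, one_div_mul_cancel (hf i xbar).ne']
  by_contra! hlt
  have hk : f k x < f k xbar := lt_of_mul_lt_mul_left hlt (hwpos k).le
  -- Hence each constraint reads `f i x ≤ f i xbar`, and `x` dominates `xbar`.
  refine hpareto ⟨x, fun i => ?_, k, hk⟩
  by_cases hik : i = k
  · exact hik ▸ hk.le
  · have h := hx i hik
    rw [hval k, ← hval i] at h
    exact le_of_mul_le_mul_left h (hwpos i)
end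

section
/- If for some index k the point x̄ ∈ X solves the scalar problem (P_{x̄}^k) — i.e. for every x ∈ X satisfying w_i(x̄)·f_i(x) ≤ w_k(x̄)·f_k(x̄) for all i ≠ k one has w_k(x̄)·f_k(x̄) ≤ w_k(x̄)·f_k(x) — then x̄ is a weak Pareto point. -/
theorem scalar_solution_is_weak_pareto
    {X : Type*} (l : ℕ) (hl : 1 ≤ l)
    (f : Fin l → X → ℝ) (hf : ∀ (i : Fin l) (x : X), 0 < f i x)
    (w : X → Fin l → ℝ)
    (hw : ∀ (x : X) (i : Fin l), w x i = (1 / f i x) / ∑ j : Fin l, 1 / f j x)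
    (xbar : X) (k : Fin l)
    (hsol : ∀ x : X,
      (∀ i : Fin l, i ≠ k → w xbar i * f i x ≤ w xbar k * f k xbar) →
      w xbar k * f k xbar ≤ w xbar k * f k x) :
    ¬ ∃ x : X, ∀ i : Fin l, f i x < f i xbar := by
  rintro ⟨x, hx⟩
  have hS : 0 < ∑ j : Fin l, 1 / f j xbar :=
    Finset.sum_pos (fun j _ => one_div_pos.mpr (hf j xbar)) ⟨k, Finset.mem_univ k⟩
  have hpos : ∀ i, 0 < w xbar i := fun i => by
    rw [hw]
    exact div_pos (one_div_pos.mpr (hf i xbar)) hS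
  -- The weights equalize the weighted objectives at `xbar`, so a point that improves every
  -- objective is feasible for the scalar problem and has a strictly smaller value there.
  have heq : ∀ i, w xbar i * f i xbar = 1 / ∑ j : Fin l, 1 / f j xbar := fun i => by
    rw [hw, div_mul_eq_mul_div, one_div_mul_cancel (hf i xbar).ne']
  have hlt : ∀ i, w xbar i * f i x < w xbar k * f k xbar := fun i => by
    rw [heq k, ← heq i]
    exact mul_lt_mul_of_pos_left (hx i) (hpos i)
  exact absurd (hsol x fun i _ => (hlt i).le) (not_le.mpr (hlt k))
end

section
/- If the point x̄ ∈ X solves the scalar problem (P_{x̄}^k) for every index k = 1, …, ℓ — i.e. for each k and every x ∈ X satisfying w_i(x̄)·f_i(x) ≤ w_k(x̄)·f_k(x̄) for all i ≠ k one has w_k(x̄)·f_k(x̄) ≤ w_k(x̄)·f_k(x) — then x̄ is a Pareto (efficient) point. -/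
theorem scalar_solutions_all_k_is_pareto
    {X : Type*} (l : ℕ) (hl : 1 ≤ l)
    (f : Fin l → X → ℝ) (hf : ∀ (i : Fin l) (x : X), 0 < f i x)
    (w : X → Fin l → ℝ)
    (hw : ∀ (x : X) (i : Fin l), w x i = (1 / f i x) / ∑ j : Fin l, 1 / f j x)
    (xbar : X)
    (hsol : ∀ k : Fin l, ∀ x : X,
      (∀ i : Fin l, i ≠ k → w xbar i * f i x ≤ w xbar k * f k xbar) →
      w xbar k * f k xbar ≤ w xbar k * f k x) :
    ¬ ∃ x : X, (∀ i : Fin l, f i x ≤ f i xbar) ∧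
      (∃ j : Fin l, f j x < f j xbar) := by
  rintro ⟨x, hle, j, hj⟩
  have hS : 0 < ∑ i : Fin l, 1 / f i xbar :=
    Finset.sum_pos (fun i _ => one_div_pos.2 (hf i xbar)) ⟨j, Finset.mem_univ j⟩
  have hpos : ∀ i, 0 < w xbar i := fun i => by
    rw [hw]
    exact div_pos (one_div_pos.2 (hf i xbar)) hS
  -- The weights equalize all weighted objectives at `xbar`, so a dominating `x` is feasible
  -- for the `j`-th scalar problem and contradicts the optimality of `xbar` there.
  have heq : ∀ i, w xbar i * f i xbar = 1 / ∑ i : Fin l, 1 / f i xbar := fun i => by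
    rw [hw, div_mul_eq_mul_div, one_div_mul_cancel (hf i xbar).ne']
  have hopt := hsol j x fun i _ => by
    rw [heq j, ← heq i]
    exact mul_le_mul_of_nonneg_left (hle i) (hpos i).le
  exact absurd (le_of_mul_le_mul_left hopt (hpos j)) (not_le.2 hj)
end
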